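/- arXiv:1105.1395 — 10 statements merged into one kernel-verified Lean document; each statement's English description precedes it below -/
import Mathlib

section
/- Let L be a finite lattice, let b ∈ L, and let φ : L → ℝ. Let A = {a_1,…,a_n} be a b-meet antichain, and let L_A^b = {⋀A' ∧ b : A' ⊆ A} be the induced subposet of L (a finite lattice with maximum b), with Möbius function μ_A^b. Then ∇_A^b φ = Σ_{x ∈ L_A^b} φ(x) · μ_A^b(x, b). -/
/-!
Group the subsets `A' ⊆ A` by the value `z = ⋀A' ∧ b`: this gives
`∇_A^b φ = Σ_z φ(z) ν(z)`, where `ν(z)` is the sum of `(-1)^|A'|` over the fibre above `z`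
(`crosscut`). For `x ∈ L_A^b` we have `x ≤ ⋀A' ∧ b` exactly when `A' ⊆ {a ∈ A : x ≤ a}`, so
`Σ_{z ≥ x} ν(z)` is an alternating sum over a full power set: it is `1` if no `a ∈ A` lies
above `x`, that is if `x = b`, and `0` otherwise (`sum_crosscut`). This is the recurrence that
determines `μ(·, b)`, whence `ν = μ(·, b)` on `L_A^b` by downward induction
(`eq_of_upper_sums_eq`). It is Rota's crosscut theorem for `L_A^b`.
-/

attribute [local instance 50] Classical.propDecidable

/-- The successive difference functional
`∇_A^b φ = Σ_{A' ⊆ A} (−1)^{|A'|} φ(⋀A' ∧ b)`, with `⋀∅ = 1̂`. -/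
def nablaF {L : Type*} [Lattice L] [Fintype L] [BoundedOrder L]
    (φ : L → ℝ) (A : Finset L) (b : L) : ℝ :=
  ∑ A' ∈ A.powerset, (-1 : ℝ) ^ A'.card * φ (A'.inf id ⊓ b)

/-- `A` is a `b`-meet antichain: the map `a ↦ a ⊓ b` is injective on `A` and its image
is an antichain; moreover `b ≰ a` for every `a ∈ A` (which covers the singleton case). -/
def IsMeetAntichain {L : Type*} [Lattice L] (A : Finset L) (b : L) : Prop :=
  A.Nonempty ∧ Set.InjOn (· ⊓ b) (A : Set L) ∧
    IsAntichain (· ≤ ·) ((A.image (· ⊓ b) : Finset L) : Set L) ∧ ∀ a ∈ A, ¬ b ≤ a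

/-- The induced subposet `L_A^b = {⋀A' ∧ b : A' ⊆ A}` of `L`. -/
noncomputable def meetLattice {L : Type*} [Lattice L] [Fintype L] [BoundedOrder L]
    (A : Finset L) (b : L) : Finset L :=
  A.powerset.image (fun A' => A'.inf id ⊓ b)

/-- The signed number of subsets `A' ⊆ A` with `⋀A' ∧ b = z`, each counted as `(-1)^|A'|`. -/
noncomputable def crosscut {L : Type*} [Lattice L] [BoundedOrder L]
    (A : Finset L) (b z : L) : ℝ :=
  ∑ A' ∈ A.powerset.filter (fun A' => A'.inf id ⊓ b = z), (-1 : ℝ) ^ A'.card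

lemma sum_powerset_neg_one_pow_card_real {L : Type*} (S : Finset L) :
    ∑ A' ∈ S.powerset, (-1 : ℝ) ^ A'.card = if S = ∅ then 1 else 0 := by
  have h := congrArg (Int.cast : ℤ → ℝ) (Finset.sum_powerset_neg_one_pow_card (x := S))
  push_cast at h
  exact h

lemma le_of_mem_meetLattice {L : Type*} [Lattice L] [Fintype L] [BoundedOrder L]
    {A : Finset L} {b x : L} (hx : x ∈ meetLattice A b) : x ≤ b := by
  obtain ⟨A', -, rfl⟩ := Finset.mem_image.1 hx
  exact inf_le_right

lemma mem_meetLattice_self {L : Type*} [Lattice L] [Fintype L] [BoundedOrder L]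
    (A : Finset L) (b : L) : b ∈ meetLattice A b :=
  Finset.mem_image.2 ⟨∅, by simp, by simp⟩

/-- An element of `L_A^b` has no element of `A` above it only if it is the maximum `b`; the
converse holds because no element of `A` lies above `b`. -/
lemma filter_le_eq_empty_iff {L : Type*} [Lattice L] [Fintype L] [BoundedOrder L]
    {A : Finset L} {b x : L} (hb : ∀ a ∈ A, ¬ b ≤ a) (hx : x ∈ meetLattice A b) :
    A.filter (fun a => x ≤ a) = ∅ ↔ x = b := by
  rw [Finset.filter_eq_empty_iff]
  constructor
  · intro h
    obtain ⟨A', hA', rfl⟩ := Finset.mem_image.1 hx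
    have hempty : A' = ∅ := Finset.eq_empty_of_forall_notMem fun a ha =>
      h (Finset.mem_powerset.1 hA' ha) (inf_le_left.trans (Finset.inf_le (f := id) ha))
    simp [hempty]
  · rintro rfl a ha
    exact hb a ha

/-- The crosscut numbers satisfy the Möbius recurrence of `L_A^b` with upper endpoint `b`. -/
lemma sum_crosscut {L : Type*} [Lattice L] [Fintype L] [BoundedOrder L]
    {A : Finset L} {b x : L} (hb : ∀ a ∈ A, ¬ b ≤ a) (hx : x ∈ meetLattice A b) :
    ∑ z ∈ (meetLattice A b).filter (fun z => x ≤ z), crosscut A b z =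
      if x = b then (1 : ℝ) else 0 := by
  have hxb := le_of_mem_meetLattice hx
  have hset : A.powerset.filter (fun A' => x ≤ A'.inf id ⊓ b) =
      (A.filter (fun a => x ≤ a)).powerset := by
    ext A'
    simp only [Finset.mem_filter, Finset.mem_powerset, le_inf_iff, Finset.le_inf_iff, id,
      Finset.subset_iff]
    grind
  have hfib : ∑ z ∈ (meetLattice A b).filter (fun z => x ≤ z), crosscut A b z =
      ∑ A' ∈ A.powerset.filter (fun A' => x ≤ A'.inf id ⊓ b), (-1 : ℝ) ^ A'.card := by
    rw [← Finset.sum_fiberwise_of_maps_to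
      (s := A.powerset.filter (fun A' => x ≤ A'.inf id ⊓ b))
      (t := (meetLattice A b).filter (fun z => x ≤ z)) (g := fun A' => A'.inf id ⊓ b)]
    · refine Finset.sum_congr rfl fun z hz => Finset.sum_congr ?_ fun _ _ => rfl
      rw [Finset.filter_filter]
      refine Finset.filter_congr fun A' _ => ?_
      have := (Finset.mem_filter.1 hz).2
      constructor
      · rintro rfl
        exact ⟨this, rfl⟩
      · exact And.right
    · intro A' hA'
      rw [Finset.mem_filter] at hA' ⊢
      exact ⟨Finset.mem_image_of_mem _ hA'.1, hA'.2⟩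
  rw [hfib, hset, sum_powerset_neg_one_pow_card_real]
  simp only [filter_le_eq_empty_iff hb hx]

/-- Uniqueness in Möbius inversion: a function on a finite subset of a poset is determined by
its sums over upper sets. -/
lemma eq_of_upper_sums_eq {L : Type*} [PartialOrder L] [Finite L] (M : Finset L) (f g : L → ℝ)
    (h : ∀ x ∈ M, ∑ z ∈ M.filter (fun z => x ≤ z), f z = ∑ z ∈ M.filter (fun z => x ≤ z), g z) :
    ∀ x ∈ M, f x = g x := by
  intro x
  induction x using WellFoundedGT.induction with
  | ind x ih =>
    intro hx
    have hmem : x ∈ M.filter (fun z => x ≤ z) := Finset.mem_filter.2 ⟨hx, le_rfl⟩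
    have hsum := h x hx
    rw [← Finset.add_sum_erase _ _ hmem, ← Finset.add_sum_erase _ _ hmem] at hsum
    have hrest : ∑ z ∈ (M.filter (fun z => x ≤ z)).erase x, f z =
        ∑ z ∈ (M.filter (fun z => x ≤ z)).erase x, g z := by
      refine Finset.sum_congr rfl fun z hz => ?_
      obtain ⟨hne, hz⟩ := Finset.mem_erase.1 hz
      obtain ⟨hzM, hxz⟩ := Finset.mem_filter.1 hz
      exact ih z (lt_of_le_of_ne hxz hne.symm) hzM
    linarith

/-- If `A` is a `b`-meet antichain and `μ` is the Möbius function of the lattice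
`L_A^b` (characterized by the defining recurrence of the Möbius function on `L_A^b`),
then `∇_A^b φ = Σ_{x ∈ L_A^b} φ(x) μ(x, b)`. -/
theorem stmt_0 {L : Type*} [Lattice L] [Fintype L] [BoundedOrder L]
    (A : Finset L) (b : L) (φ : L → ℝ) (hA : IsMeetAntichain A b)
    (μ : L → L → ℝ)
    (hμ : ∀ x ∈ meetLattice A b, ∀ y ∈ meetLattice A b, x ≤ y →
      (∑ z ∈ (meetLattice A b).filter (fun z => x ≤ z ∧ z ≤ y), μ z y) =
        (if x = y then (1 : ℝ) else 0)) :
    nablaF φ A b = ∑ x ∈ meetLattice A b, φ x * μ x b := by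
  have hcross : ∀ x ∈ meetLattice A b, crosscut A b x = μ x b := by
    refine eq_of_upper_sums_eq _ _ (fun z => μ z b) fun x hx => ?_
    rw [sum_crosscut hA.2.2.2 hx,
      ← hμ x hx b (mem_meetLattice_self A b) (le_of_mem_meetLattice hx)]
    refine Finset.sum_congr (Finset.filter_congr fun z hz => ?_) fun _ _ => rfl
    exact and_iff_left (le_of_mem_meetLattice hz)
  unfold nablaF
  rw [← Finset.sum_fiberwise_of_maps_to (t := meetLattice A b)
    (g := fun A' => A'.inf id ⊓ b) fun A' hA' => Finset.mem_image_of_mem _ hA']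
  refine Finset.sum_congr rfl fun x hx => ?_
  rw [← hcross x hx, crosscut, Finset.mul_sum]
  refine Finset.sum_congr rfl fun A' hA' => ?_
  rw [(Finset.mem_filter.1 hA').2, mul_comm]
end

section
/- Let L be a finite lattice, b ∈ L, and A ⊆ L a nonempty subset with b ≰ a for every a ∈ A. If Ã is a maximal b-meet antichain of A, then ∇_A^b φ = ∇_Ã^b φ for every φ : L → ℝ. -/
/-!
An element `c` whose meet with `b` lies below `a ⊓ b` for some `a ∈ B` contributes nothing to
`∇_B^b`: the subsets containing `c` cancel in pairs under toggling `a`, which changes the sign but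
not the meet with `b` (`nablaF_insert_of_le`). Every element of `A \ Ã` is dominated in this way by
an element of `Ã`, so these elements may be added to `Ã` one at a time.
-/


attribute [local instance 50] Classical.propDecidable

/-- Adjoining to `B` an element dominated, after meeting with `b`, by an element of `B` does not
change the successive difference. -/
lemma nablaF_insert_of_le {L : Type*} [Lattice L] [Fintype L] [BoundedOrder L]
    (φ : L → ℝ) (B : Finset L) (b c a : L) (hc : c ∉ B) (ha : a ∈ B)
    (h : c ⊓ b ≤ a ⊓ b) : nablaF φ (insert c B) b = nablaF φ B b := by
  unfold nablaF
  rw [Finset.sum_powerset_insert hc, add_eq_left]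
  obtain ⟨B', haB', rfl⟩ : ∃ B', a ∉ B' ∧ insert a B' = B :=
    ⟨B.erase a, Finset.notMem_erase a B, Finset.insert_erase ha⟩
  rw [Finset.sum_powerset_insert haB', ← Finset.sum_add_distrib]
  refine Finset.sum_eq_zero fun t ht => ?_
  rw [Finset.mem_powerset] at ht
  have hat : a ∉ t := fun h' => haB' (ht h')
  have hct : c ∉ insert a t := fun h' => hc (Finset.insert_subset_insert a ht h')
  have hct' : c ∉ t := fun h' => hct (Finset.mem_insert_of_mem h')
  have hinf : (insert c (insert a t)).inf id ⊓ b = (insert c t).inf id ⊓ b := by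
    simp only [Finset.inf_insert, id]
    apply le_antisymm
    · exact inf_le_inf_right b (inf_le_inf_left c inf_le_right)
    · have hca : c ⊓ t.inf id ⊓ b ≤ a :=
        (inf_le_inf_right b inf_le_left).trans (h.trans inf_le_left)
      exact le_inf (le_inf (inf_le_left.trans inf_le_left)
        (le_inf hca (inf_le_left.trans inf_le_right))) inf_le_right
  rw [hinf, Finset.card_insert_of_notMem hct, Finset.card_insert_of_notMem hat,
    Finset.card_insert_of_notMem hct']
  ring

/-- If `Ã` is a maximal `b`-meet antichain of a nonempty `A` with `b ≰ a` for all `a ∈ A`,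
then `∇_A^b φ = ∇_Ã^b φ` for every `φ : L → ℝ`. -/
theorem stmt_1 {L : Type*} [Lattice L] [Fintype L] [BoundedOrder L]
    (A Atil : Finset L) (b : L) (hA : A.Nonempty) (hb : ∀ a ∈ A, ¬ b ≤ a)
    (hsub : Atil ⊆ A) (hanti : IsMeetAntichain Atil b)
    (hdom : ∀ a ∈ A, ∃ a' ∈ Atil, a ⊓ b ≤ a' ⊓ b)
    (φ : L → ℝ) :
    nablaF φ A b = nablaF φ Atil b := by
  have key : ∀ C : Finset L, C ⊆ A → nablaF φ (C ∪ Atil) b = nablaF φ Atil b := by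
    intro C
    induction C using Finset.induction_on with
    | empty => intro _; rw [Finset.empty_union]
    | insert c C _ ih =>
      intro hC
      rw [Finset.insert_union, ← ih ((Finset.subset_insert c C).trans hC)]
      by_cases hmem : c ∈ C ∪ Atil
      · rw [Finset.insert_eq_self.mpr hmem]
      · obtain ⟨a, ha, hle⟩ := hdom c (hC (Finset.mem_insert_self c C))
        exact nablaF_insert_of_le φ _ b c a hmem (Finset.mem_union_right C ha) hle
  have hfull := key A subset_rfl
  rwa [Finset.union_eq_left.mpr hsub] at hfull
end

section
/- Let L be a finite lattice, let φ : L → ℝ with Möbius inverse f, let A ⊆ L be a nonempty subset and b ∈ L. Then ∇_A^b φ = Σ_{x ∈ π_A^b} f(x), where π_A^b = {x ∈ L : x ≤ b and x ≰ a for all a ∈ A} (the sum being 0 when π_A^b is empty). -/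
/-!
Substituting `φ y = ∑ x, [x ≤ y] f x` in `∇_A^b φ` and exchanging the sums, the coefficient of
`f x` is `[x ≤ b] * ∑ A' ⊆ A, (-1)^|A'| [x ≤ ⋀ A']`. Since `[x ≤ ⋀ A'] = ∏ a ∈ A', [x ≤ a]`, this
sum is the expansion of `∏ a ∈ A, (1 - [x ≤ a])`, the indicator of `x` lying below no element
of `A` (`sum_powerset_le_inf`).
-/

attribute [local instance 50] Classical.propDecidable

/-- `f` is the Möbius inverse of `φ`: `φ(x) = Σ_{y ≤ x} f(y)` for all `x`. -/
def IsMobiusInv {L : Type*} [Lattice L] [Fintype L] (φ f : L → ℝ) : Prop :=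
  ∀ x : L, φ x = ∑ y ∈ Finset.univ.filter (fun y => y ≤ x), f y

/-- Inclusion-exclusion at a single point: the expansion of `∏ a ∈ A, (1 - [x ≤ a])`. -/
theorem sum_powerset_le_inf {L : Type*} [Lattice L] [BoundedOrder L] (A : Finset L) (x : L) :
    ∑ A' ∈ A.powerset, (-1 : ℝ) ^ A'.card * (if x ≤ A'.inf id then 1 else 0) =
      if ∀ a ∈ A, ¬ x ≤ a then 1 else 0 := by
  have h1 : ∏ a ∈ A, (1 + (if x ≤ a then (-1 : ℝ) else 0)) =
      if ∀ a ∈ A, ¬ x ≤ a then 1 else 0 := by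
    split_ifs with h
    · exact Finset.prod_eq_one fun a ha => by simp [h a ha]
    · push Not at h
      obtain ⟨a, ha, hxa⟩ := h
      exact Finset.prod_eq_zero ha (by simp [hxa])
  rw [← h1, Finset.prod_one_add]
  refine Finset.sum_congr rfl fun t _ => ?_
  split_ifs with h
  · simp only [Finset.le_inf_iff, id] at h
    rw [Finset.prod_congr rfl fun a ha => if_pos (h a ha)]
    simp
  · simp only [Finset.le_inf_iff, id] at h
    push Not at h
    obtain ⟨a, ha, hxa⟩ := h
    rw [Finset.prod_eq_zero ha (if_neg hxa), mul_zero]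

/-- `∇_A^b φ = Σ_{x ∈ π_A^b} f(x)`, where
`π_A^b = {x ∈ L : x ≤ b and x ≰ a for all a ∈ A}`. -/
theorem stmt_2 {L : Type*} [Lattice L] [Fintype L] [BoundedOrder L]
    (φ f : L → ℝ) (hf : IsMobiusInv φ f)
    (A : Finset L) (hA : A.Nonempty) (b : L) :
    nablaF φ A b =
      ∑ x ∈ Finset.univ.filter (fun x : L => x ≤ b ∧ ∀ a ∈ A, ¬ x ≤ a), f x := by
  have hφ : ∀ y, φ y = ∑ x, if x ≤ y then f x else 0 := fun y => by
    rw [hf y, Finset.sum_filter]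
  unfold nablaF
  simp_rw [hφ, Finset.mul_sum]
  rw [Finset.sum_comm, Finset.sum_filter]
  refine Finset.sum_congr rfl fun x _ => ?_
  by_cases hb : x ≤ b
  · have h := congrArg (· * f x) (sum_powerset_le_inf A x)
    simpa [hb, Finset.sum_mul, mul_assoc, le_inf_iff] using h
  · simp [hb, le_inf_iff]
end

section
/- Let L be a finite lattice and let φ : L → ℝ satisfy φ(0̂) ≥ 0. Then the Möbius inverse f of φ is nonnegative on L if and only if φ is completely monotone. -/
/-!
If `f` is the Möbius inverse of `φ`, then `∇_{a_1,…,a_n} φ (x)` is the sum of `f` over the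
`y ≤ x` lying below none of the `a_i` (`succDiff_eq_sum`): applying `∇_a` removes exactly the
terms with `y ≤ a`, since `y ≤ x ⊓ a` means `y ≤ x` and `y ≤ a`. Hence `f ≥ 0` gives complete
monotonicity. Conversely, for `x ≠ ⊥`, letting the `a_i` run over all elements strictly
below `x` leaves the single term `f x`, while `f ⊥ = φ ⊥ ≥ 0` by hypothesis.
-/

attribute [local instance 50] Classical.propDecidable

/-- The successive difference operator `∇_{a_1,…,a_n} φ`, defined recursively by
`∇_a φ(x) = φ(x) − φ(x ∧ a)` and `∇_{a_1,…,a_n} φ = ∇_{a_n}(∇_{a_1,…,a_{n−1}} φ)`. -/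
def succDiff {L : Type*} [Lattice L] (φ : L → ℝ) (l : List L) : L → ℝ :=
  l.foldl (fun ψ a => fun x => ψ x - ψ (x ⊓ a)) φ

theorem succDiff_eq_sum {L : Type*} [Lattice L] [Fintype L]
    {φ f : L → ℝ} (hf : IsMobiusInv φ f) (l : List L) (x : L) :
    succDiff φ l x =
      ∑ y ∈ Finset.univ.filter (fun y => y ≤ x ∧ ∀ a ∈ l, ¬ y ≤ a), f y := by
  induction l using List.reverseRecOn generalizing x with
  | nil => simpa [succDiff] using hf x
  | append_singleton l a ih =>
    have h : succDiff φ (l ++ [a]) x = succDiff φ l x - succDiff φ l (x ⊓ a) := by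
      simp [succDiff, List.foldl_append]
    rw [h, ih, ih, Finset.sum_filter, Finset.sum_filter, Finset.sum_filter,
      ← Finset.sum_sub_distrib]
    refine Finset.sum_congr rfl fun y _ => ?_
    simp only [le_inf_iff, List.mem_append, List.mem_singleton, or_imp, forall_and, forall_eq]
    by_cases h1 : y ≤ x <;> by_cases h2 : y ≤ a <;> by_cases h3 : ∀ b ∈ l, ¬ y ≤ b <;>
      simp [h1, h2, h3]

/-- If `φ(0̂) ≥ 0`, the Möbius inverse of `φ` is nonnegative iff `φ` is completely
monotone, i.e., all successive differences (`n ≥ 1`) are nonnegative. -/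
theorem stmt_3 {L : Type*} [Lattice L] [Fintype L] [BoundedOrder L]
    (φ f : L → ℝ) (hf : IsMobiusInv φ f) (h0 : 0 ≤ φ ⊥) :
    (∀ x, 0 ≤ f x) ↔ (∀ l : List L, l ≠ [] → ∀ x, 0 ≤ succDiff φ l x) := by
  constructor
  · intro h l _ x
    rw [succDiff_eq_sum hf]
    exact Finset.sum_nonneg fun y _ => h y
  · intro h x
    by_cases hx : x = ⊥
    · subst hx
      have h1 := hf ⊥
      have h2 : Finset.univ.filter (fun y : L => y ≤ ⊥) = {⊥} := by
        ext y; simp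
      rw [h2, Finset.sum_singleton] at h1
      rwa [← h1]
    · have hmem : ∀ y, y ∈ (Finset.univ.filter (fun y : L => y < x)).toList ↔ y < x := by
        intro y; simp
      -- The list of elements strictly below `x` is nonempty because it contains `⊥`.
      have h1 := h (Finset.univ.filter (fun y : L => y < x)).toList
        (List.ne_nil_of_mem ((hmem ⊥).2 (bot_lt_iff_ne_bot.2 hx))) x
      rw [succDiff_eq_sum hf] at h1
      have h2 : Finset.univ.filter (fun y : L => y ≤ x ∧
          ∀ a ∈ (Finset.univ.filter (fun y : L => y < x)).toList, ¬ y ≤ a) = {x} := by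
        ext y
        simp only [Finset.mem_filter, Finset.mem_univ, true_and, Finset.mem_singleton, hmem]
        constructor
        · rintro ⟨hy, hn⟩
          by_contra hne
          exact hn y (lt_of_le_of_ne hy hne) le_rfl
        · rintro rfl
          exact ⟨le_rfl, fun a ha hle => absurd ha (not_lt_of_ge hle)⟩
      rwa [h2, Finset.sum_singleton] at h1
end

section
/- Let L be a finite lattice, let φ : L → ℝ have Möbius inverse f, and let V be an order ideal (down-set) of L. Then f is supported on V (i.e., f(x) ≠ 0 implies x ∈ V) if and only if ∇_V^b φ = 0 for every b ∈ L with b ∉ V. -/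
/-!
Expanding `φ` through its Möbius inverse and exchanging sums, the coefficient of `f y` (for `y ≤ b`)
in `∇_V^b φ` is the alternating sum over the subsets of `{a ∈ V | y ≤ a}`, which is `1` if that set
is empty and `0` otherwise. Since `V` is a down-set, that set is empty exactly when `y ∉ V`, so
`∇_V^b φ` is the sum of `f y` over `y ≤ b` with `y ∉ V` (`nablaF_eq_sum`). The forward direction is
immediate from this formula; the converse follows by well-founded induction on `b`.
-/

attribute [local instance 50] Classical.propDecidable

/-- The alternating sum over the subsets of `V` all of whose elements lie above `y` detects whether
`y` belongs to the down-set `V`. -/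
theorem alternating_sum_upper_bounds {L : Type*} [Lattice L] [Fintype L] [BoundedOrder L]
    (V : Finset L) (hV : ∀ ⦃x y : L⦄, x ≤ y → y ∈ V → x ∈ V) (y : L) :
    ∑ A ∈ V.powerset, (if y ≤ A.inf id then (-1 : ℝ) ^ A.card else 0) =
      if y ∈ V then 0 else 1 := by
  rw [← Finset.sum_filter]
  have h1 : V.powerset.filter (fun A => y ≤ A.inf id)
      = (V.filter (fun a => y ≤ a)).powerset := by
    ext A
    simp only [Finset.mem_filter, Finset.mem_powerset, Finset.le_inf_iff, id,
      Finset.subset_iff]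
    grind
  have h2 : V.filter (fun a => y ≤ a) = ∅ ↔ y ∉ V := by
    rw [Finset.filter_eq_empty_iff]
    exact ⟨fun h hy => h hy le_rfl, fun h a ha hya => h (hV hya ha)⟩
  have h3 := congrArg (Int.cast : ℤ → ℝ)
    (Finset.sum_powerset_neg_one_pow_card (x := V.filter (fun a => y ≤ a)))
  push_cast at h3
  rw [h1, h3]
  by_cases hy : y ∈ V <;> simp [h2, hy]

theorem nablaF_eq_sum {L : Type*} [Lattice L] [Fintype L] [BoundedOrder L]
    (φ f : L → ℝ) (hf : IsMobiusInv φ f)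
    (V : Finset L) (hV : ∀ ⦃x y : L⦄, x ≤ y → y ∈ V → x ∈ V) (b : L) :
    nablaF φ V b = ∑ y, if y ≤ b ∧ y ∉ V then f y else 0 := by
  unfold nablaF
  simp_rw [hf _, Finset.sum_filter, Finset.mul_sum]
  rw [Finset.sum_comm]
  refine Finset.sum_congr rfl fun y _ => ?_
  have h := alternating_sum_upper_bounds V hV y
  by_cases hb : y ≤ b
  · have h' : ∀ A ∈ V.powerset, (-1 : ℝ) ^ A.card * (if y ≤ A.inf id ⊓ b then f y else 0)
        = (if y ≤ A.inf id then (-1 : ℝ) ^ A.card else 0) * f y := by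
      intro A _
      by_cases hA : y ≤ A.inf id <;> simp only [le_inf_iff, hA, hb] <;> simp
    rw [Finset.sum_congr rfl h', ← Finset.sum_mul, h]
    by_cases hy : y ∈ V <;> simp [hb, hy]
  · simp [hb]

/-- For an order ideal (down-set) `V` of `L`, the Möbius inverse `f` of `φ` is
supported on `V` iff `∇_V^b φ = 0` for every `b ∉ V`. -/
theorem stmt_4 {L : Type*} [Lattice L] [Fintype L] [BoundedOrder L]
    (φ f : L → ℝ) (hf : IsMobiusInv φ f)
    (V : Finset L) (hV : ∀ ⦃x y : L⦄, x ≤ y → y ∈ V → x ∈ V) :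
    (∀ x : L, f x ≠ 0 → x ∈ V) ↔ (∀ b ∉ V, nablaF φ V b = 0) := by
  simp only [nablaF_eq_sum φ f hf V hV]
  constructor
  · intro h b _
    refine Finset.sum_eq_zero fun y _ => ?_
    split_ifs with hy
    · by_contra hne
      exact hy.2 (h y hne)
    · rfl
  · intro h x
    induction x using WellFoundedLT.induction with
    | ind x ih =>
      intro hx
      by_contra hxV
      -- By induction, `x` contributes the only term of the sum for `b = x` that can be nonzero.
      have hs := h x hxV
      rw [Finset.sum_eq_single x] at hs
      · simp [hxV] at hs
        exact hx hs
      · intro y _ hyx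
        split_ifs with hy
        · by_contra hne
          exact hy.2 (ih y (lt_of_le_of_ne hy.1 hyx) hne)
        · rfl
      · simp
end

section
/- The projection Π is surjective from M_∞(𝓛) onto M_1(L): for every nonnegative monotone function φ : L → ℝ there exists a nonnegative completely monotone function Φ : 𝓛 → ℝ with Φ(⟨x⟩*) = φ(x) for every x ∈ L. -/
/-!
The extension is `Φ(W) = min_{w ∈ W} φ(w)`. On a principal up-set the minimum is attained at the
generator, because `φ` is monotone. Since `Φ(W ∪ U) = min (Φ W) (Φ U)`, one has
`∇_U Φ = max (Φ - Φ U) 0`, which is again nonnegative and again turns unions into minima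
(it is `Φ` followed by a monotone function). Hence all successive differences are nonnegative, by
induction on their number (`succDiffU_nonneg_of_union_eq_min`).
-/

attribute [local instance 50] Classical.propDecidable

/-- `U` is a member of `𝓛`: a nonempty dual order ideal (up-set) of `L`. -/
def MemL {L : Type*} [Lattice L] (U : Finset L) : Prop :=
  (∀ ⦃x y : L⦄, x ∈ U → x ≤ y → y ∈ U) ∧ U.Nonempty

/-- The family `𝓛` of nonempty up-sets of `L`, as a finset of finsets. -/
noncomputable def LFam (L : Type*) [Lattice L] [Fintype L] : Finset (Finset L) :=
  Finset.univ.filter (fun U => MemL U)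

/-- The successive difference operator on `𝓛` (ordered by reverse inclusion, so that
the meet of two up-sets is their union): `∇_U Φ(W) = Φ(W) − Φ(W ⊓ U) = Φ(W) − Φ(W ∪ U)`,
iterated over a list. -/
def succDiffU {L : Type*} [Lattice L] [DecidableEq L]
    (Φ : Finset L → ℝ) (l : List (Finset L)) : Finset L → ℝ :=
  l.foldl (fun Ψ U => fun W => Ψ W - Ψ (W ∪ U)) Φ

/-- `Φ ∈ M_∞(𝓛)`: `Φ` is nonnegative and completely monotone on `𝓛`
(the empty list gives nonnegativity of `Φ` itself). -/
def Minf {L : Type*} [Lattice L] [DecidableEq L] (Φ : Finset L → ℝ) : Prop :=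
  ∀ l : List (Finset L), (∀ U ∈ l, MemL U) → ∀ W : Finset L, MemL W →
    0 ≤ succDiffU Φ l W

/-- The principal up-set `⟨x⟩* = {y ∈ L : y ≥ x}`. -/
noncomputable def pUp {L : Type*} [Lattice L] [Fintype L] (x : L) : Finset L :=
  Finset.univ.filter (fun y => x ≤ y)

/-- The up-set `⟨A⟩*` generated by `A ⊆ L`. -/
noncomputable def upGen {L : Type*} [Lattice L] [Fintype L] (A : Finset L) : Finset L :=
  Finset.univ.filter (fun y => ∃ a ∈ A, a ≤ y)

/-- `φ ∈ M_1(L)`: `φ` is nonnegative and monotone. -/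
def M1 {L : Type*} [Lattice L] (φ : L → ℝ) : Prop :=
  (∀ x, 0 ≤ φ x) ∧ Monotone φ

/-- `f` is the Möbius inverse of `Φ` on `𝓛`: `Φ(U) = Σ_{V ⪯ U} f(V)`,
where `V ⪯ U` means `U ⊆ V`. -/
def IsMobiusInvL {L : Type*} [Lattice L] [Fintype L] (Φ f : Finset L → ℝ) : Prop :=
  ∀ U : Finset L, MemL U → Φ U = ∑ V ∈ (LFam L).filter (fun V => U ⊆ V), f V

/-- A nonnegative function turning unions into minima has nonnegative successive differences of
all orders: both properties pass to `∇_U Ψ = max (Ψ - Ψ U) 0`. -/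
lemma succDiffU_nonneg_of_union_eq_min {L : Type*} [Lattice L] [DecidableEq L]
    (l : List (Finset L)) (hl : ∀ U ∈ l, U.Nonempty) (Ψ : Finset L → ℝ)
    (h0 : ∀ W : Finset L, W.Nonempty → 0 ≤ Ψ W)
    (hmin : ∀ W U : Finset L, W.Nonempty → U.Nonempty → Ψ (W ∪ U) = min (Ψ W) (Ψ U))
    (W : Finset L) (hW : W.Nonempty) : 0 ≤ succDiffU Ψ l W := by
  induction l generalizing Ψ with
  | nil => exact h0 W hW
  | cons U l ih =>
    have hU : U.Nonempty := hl U (by simp)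
    refine ih (fun V hV => hl V (by simp [hV])) (fun V => Ψ V - Ψ (V ∪ U)) ?_ ?_
    · intro V hV
      simp [hmin V U hV hU]
    · intro V V' hV hV'
      simp only [hmin _ U (hV.mono Finset.subset_union_left) hU, hmin V U hV hU,
        hmin V' U hV' hU, hmin V V' hV hV']
      grind

/-- The projection `Π` is surjective from `M_∞(𝓛)` onto `M_1(L)`: every nonnegative
monotone `φ` has a nonnegative completely monotone extension `Φ` with
`Φ(⟨x⟩*) = φ(x)` for all `x`. -/
theorem stmt_5 {L : Type*} [Lattice L] [Fintype L] [BoundedOrder L] [DecidableEq L]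
    (φ : L → ℝ) (hφ : M1 φ) :
    ∃ Φ : Finset L → ℝ, Minf Φ ∧ ∀ x : L, Φ (pUp x) = φ x := by
  -- The value on the empty set is irrelevant, since `𝓛` contains only nonempty up-sets.
  refine ⟨fun W => if h : W.Nonempty then W.inf' h φ else 0, ?_, ?_⟩
  · intro l hl W hW
    refine succDiffU_nonneg_of_union_eq_min l (fun U hU => (hl U hU).2) _ ?_ ?_ W hW.2
    · intro V hV
      simp only [hV, dif_pos]
      exact Finset.le_inf' _ _ fun x _ => hφ.1 x
    · intro V U hV hU
      have hVU : (V ∪ U).Nonempty := hV.mono Finset.subset_union_left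
      simp only [hV, hU, hVU, dif_pos]
      exact Finset.inf'_union hV hU φ
  · intro x
    have hx : x ∈ pUp x := by simp [pUp]
    have hne : (pUp x).Nonempty := ⟨x, hx⟩
    simp only [hne, dif_pos]
    refine le_antisymm (Finset.inf'_le _ hx) (Finset.le_inf' _ _ fun y hy => hφ.2 ?_)
    simpa [pUp] using hy
end

section
/- Let L be a finite lattice, let φ ∈ M_1(L), and let Φ ∈ M_∞(𝓛) satisfy Π(Φ) = φ. Then the Möbius inverse of Φ on 𝓛 is supported on the set 𝓛₀ of principal up-sets (i.e., Φ is the Möbius extension of φ) if and only if Φ(⟨a,b⟩*) = φ(a ∧ b) for every pair a, b ∈ L. -/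
/-!
Since `Φ(U)` is the sum of `f` over the members of `𝓛` containing `U`, a successive difference of
`Φ` at `W` along `l` is the sum of `f` over those `V ⊇ W` that contain no member of `l`
(`succDiffU_eq_sum`). Taking `l` to be all strict supersets of `W` in `𝓛` isolates `f W`, so
complete monotonicity forces `f ≥ 0` (`mobius_nonneg`).

On the other hand `Φ(⟨a,b⟩*) - Φ(⟨a ∧ b⟩*)` is the sum of `f` over the up-sets containing `a` and
`b` but not `a ∧ b`. A principal up-set is closed under meets, so this vanishes if `f` is supported
on `𝓛₀`. Conversely, if it vanishes for all `a, b`, then by nonnegativity `f` is zero on every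
up-set that is not closed under binary meets; a nonempty finite up-set closed under binary meets is
the principal up-set of its least element.
-/

attribute [local instance 50] Classical.propDecidable

section Helpers

variable {L : Type*} [Lattice L] [Fintype L]

lemma mem_LFam {U : Finset L} : U ∈ LFam L ↔ MemL U := by
  simp [LFam]

lemma mem_pUp {x y : L} : y ∈ pUp x ↔ x ≤ y := by
  simp [pUp]

lemma memL_pUp (x : L) : MemL (pUp x) :=
  ⟨fun _ _ h hle => mem_pUp.2 ((mem_pUp.1 h).trans hle), ⟨x, mem_pUp.2 le_rfl⟩⟩

lemma MemL.union [DecidableEq L] {U V : Finset L} (hU : MemL U) (hV : MemL V) :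
    MemL (U ∪ V) := by
  refine ⟨fun x y hx hxy => ?_, hU.2.mono Finset.subset_union_left⟩
  rcases Finset.mem_union.1 hx with h | h
  · exact Finset.mem_union_left _ (hU.1 h hxy)
  · exact Finset.mem_union_right _ (hV.1 h hxy)

lemma MemL.pUp_subset_iff {V : Finset L} (hV : MemL V) {x : L} : pUp x ⊆ V ↔ x ∈ V :=
  ⟨fun h => h (mem_pUp.2 le_rfl), fun h _ hy => hV.1 h (mem_pUp.1 hy)⟩

lemma succDiffU_append_singleton [DecidableEq L] (Φ : Finset L → ℝ) (l : List (Finset L))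
    (U W : Finset L) :
    succDiffU Φ (l ++ [U]) W = succDiffU Φ l W - succDiffU Φ l (W ∪ U) := by
  simp [succDiffU, List.foldl_append]

/-- Successive differences of `Φ` in terms of its Möbius inverse: each difference along `U`
discards the terms indexed by up-sets containing `U`. -/
lemma succDiffU_eq_sum [DecidableEq L] {Φ f : Finset L → ℝ} (hf : IsMobiusInvL Φ f)
    (l : List (Finset L)) (hl : ∀ U ∈ l, MemL U) (W : Finset L) (hW : MemL W) :
    succDiffU Φ l W =
      ∑ V ∈ LFam L with W ⊆ V ∧ ∀ U ∈ l, ¬ U ⊆ V, f V := by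
  induction l using List.reverseRecOn generalizing W with
  | nil =>
    rw [show succDiffU Φ [] W = Φ W from rfl, hf W hW]
    refine Finset.sum_congr ?_ fun _ _ => rfl
    ext V
    simp
  | append_singleton l U ih =>
    have hl' : ∀ U' ∈ l, MemL U' := fun U' h => hl U' (by simp [h])
    have hU : MemL U := hl U (by simp)
    rw [succDiffU_append_singleton, ih hl' W hW, ih hl' _ (hW.union hU), sub_eq_iff_eq_add]
    simp only [Finset.sum_filter, ← Finset.sum_add_distrib]
    refine Finset.sum_congr rfl fun V _ => ?_
    simp only [List.mem_append, List.mem_singleton, Finset.union_subset_iff, or_imp,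
      forall_and, forall_eq]
    by_cases h1 : W ⊆ V <;> by_cases h2 : U ⊆ V <;> by_cases h3 : ∀ x ∈ l, ¬ x ⊆ V <;>
      simp [h1, h2, h3]

/-- The Möbius inverse of a completely monotone function is nonnegative. -/
lemma mobius_nonneg [DecidableEq L] {Φ f : Finset L → ℝ} (hΦ : Minf Φ)
    (hf : IsMobiusInvL Φ f) {W : Finset L} (hW : MemL W) : 0 ≤ f W := by
  -- Differencing along all strict supersets of `W` leaves only the term at `W` itself.
  have hl : ∀ U ∈ ((LFam L).filter (fun U => W ⊂ U)).toList, MemL U := by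
    intro U hU
    rw [Finset.mem_toList, Finset.mem_filter] at hU
    exact mem_LFam.1 hU.1
  have h := hΦ _ hl W hW
  rw [succDiffU_eq_sum hf _ hl W hW] at h
  convert h
  rw [Finset.sum_eq_single_of_mem W]
  · simp only [Finset.mem_filter, Finset.mem_toList]
    exact ⟨mem_LFam.2 hW, subset_rfl, fun U hU hUW => hU.2.2 hUW⟩
  · intro V hV hne
    simp only [Finset.mem_filter, Finset.mem_toList] at hV
    exact absurd subset_rfl
      (hV.2.2 V ⟨hV.1, Finset.ssubset_iff_subset_ne.2 ⟨hV.2.1, hne.symm⟩⟩)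

/-- The defect `Φ(⟨a,b⟩*) - Φ(⟨a ∧ b⟩*)` is carried by the up-sets that contain `a` and `b`
but not `a ∧ b`. -/
lemma union_sub_inf_eq_sum [DecidableEq L] {Φ f : Finset L → ℝ} (hf : IsMobiusInvL Φ f)
    (a b : L) :
    Φ (pUp a ∪ pUp b) - Φ (pUp (a ⊓ b)) =
      ∑ V ∈ LFam L with (a ∈ V ∧ b ∈ V) ∧ a ⊓ b ∉ V, f V := by
  rw [hf _ ((memL_pUp a).union (memL_pUp b)), hf _ (memL_pUp _), sub_eq_iff_eq_add]
  simp only [Finset.sum_filter, ← Finset.sum_add_distrib]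
  refine Finset.sum_congr rfl fun V hV => ?_
  have hV := mem_LFam.1 hV
  simp only [Finset.union_subset_iff, hV.pUp_subset_iff]
  by_cases h : a ⊓ b ∈ V
  · simp [h, hV.1 h inf_le_left, hV.1 h inf_le_right]
  · simp [h]

/-- A nonempty up-set closed under binary meets is principal, generated by its least element. -/
lemma MemL.exists_eq_pUp {U : Finset L} (hU : MemL U)
    (hinf : ∀ a ∈ U, ∀ b ∈ U, a ⊓ b ∈ U) : ∃ x : L, U = pUp x := by
  refine ⟨U.inf' hU.2 id, Finset.Subset.antisymm
    (fun y hy => mem_pUp.2 (Finset.inf'_le id hy)) ?_⟩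
  rw [hU.pUp_subset_iff]
  exact Finset.inf'_induction hU.2 id (p := fun x => x ∈ U) hinf fun _ h => h

end Helpers

/-- `Φ` is the Möbius extension of `φ` (its Möbius inverse on `𝓛` is supported on
the principal up-sets `𝓛₀`) iff `Φ(⟨a,b⟩*) = φ(a ∧ b)` for every pair `a, b ∈ L`. -/
theorem stmt_6 {L : Type*} [Lattice L] [Fintype L] [BoundedOrder L] [DecidableEq L]
    (φ : L → ℝ) (hφ : M1 φ) (Φ f : Finset L → ℝ) (hΦ : Minf Φ)
    (hmarg : ∀ x : L, Φ (pUp x) = φ x) (hf : IsMobiusInvL Φ f) :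
    (∀ U : Finset L, MemL U → f U ≠ 0 → ∃ x : L, U = pUp x) ↔
      ∀ a b : L, Φ (pUp a ∪ pUp b) = φ (a ⊓ b) := by
  constructor
  · intro h a b
    rw [← hmarg, ← sub_eq_zero, union_sub_inf_eq_sum hf]
    refine Finset.sum_eq_zero fun V hV => ?_
    rw [Finset.mem_filter, mem_LFam] at hV
    by_contra hne
    obtain ⟨x, rfl⟩ := h V hV.1 hne
    simp only [mem_pUp] at hV
    exact hV.2.2 (le_inf hV.2.1.1 hV.2.1.2)
  · intro h U hU hne
    refine hU.exists_eq_pUp fun a ha b hb => ?_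
    by_contra hab
    have hsum := union_sub_inf_eq_sum hf a b
    rw [h, hmarg, sub_self] at hsum
    have hzero := (Finset.sum_eq_zero_iff_of_nonneg fun V hV =>
      mobius_nonneg hΦ hf (mem_LFam.1 (Finset.mem_filter.1 hV).1)).1 hsum.symm
    exact hne (hzero U (Finset.mem_filter.2 ⟨mem_LFam.2 hU, ⟨ha, hb⟩, hab⟩))
end

section
/- Let L be a finite lattice and let φ : L → ℝ be nonnegative and completely monotone. Then for every nonempty subset A ⊆ L, the Fréchet bound satisfies B_φ(⟨A⟩*) = φ(⋀A); that is, the function U ↦ B_φ(U) on 𝓛 is the Möbius extension of φ. -/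
/-!
The meet map `U ↦ ⋀U` carries the meet of `𝓛` (union of up-sets) to the meet of `L`, so composing `φ`
with it turns successive differences on `𝓛` into successive differences of `φ`. Hence
`Φ₀(U) = φ(⋀U)` lies in `M_∞(𝓛)`; it extends `φ` because `⋀⟨x⟩* = x`, and it takes the value
`φ(⋀A)` at `⟨A⟩*`. Conversely, `⟨A⟩* ⊆ ⟨⋀A⟩*`, so any completely monotone extension `Φ`, being
antitone for inclusion, satisfies `Φ(⟨A⟩*) ≥ Φ(⟨⋀A⟩*) = φ(⋀A)`.
-/

attribute [local instance 50] Classical.propDecidable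

/-- `φ` is completely monotone: all successive differences (`n ≥ 1`) are nonnegative. -/
def CMono {L : Type*} [Lattice L] (φ : L → ℝ) : Prop :=
  ∀ l : List L, l ≠ [] → ∀ x, 0 ≤ succDiff φ l x

lemma succDiffU_comp_inf {L : Type*} [Lattice L] [OrderTop L] [DecidableEq L]
    (l : List (Finset L)) (φ : L → ℝ) (W : Finset L) :
    succDiffU (fun U => φ (U.inf id)) l W = succDiff φ (l.map fun U => U.inf id) (W.inf id) := by
  induction l generalizing φ with
  | nil => rfl
  | cons U l ih =>
    have h := ih (fun x => φ x - φ (x ⊓ U.inf id))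
    simp only [succDiffU, succDiff, List.map_cons, List.foldl_cons, Finset.inf_union] at h ⊢
    exact h

lemma upGen_inf {L : Type*} [Lattice L] [Fintype L] [OrderTop L] (A : Finset L) :
    (upGen A).inf id = A.inf id := by
  apply le_antisymm
  · refine Finset.le_inf fun a ha => Finset.inf_le (f := id) ?_
    simpa [upGen] using ⟨a, ha, le_rfl⟩
  · refine Finset.le_inf fun y hy => ?_
    obtain ⟨a, ha, hay⟩ : ∃ a ∈ A, a ≤ y := by simpa [upGen] using hy
    exact (Finset.inf_le (f := id) ha).trans hay

lemma pUp_eq_upGen {L : Type*} [Lattice L] [Fintype L] (x : L) : pUp x = upGen {x} := by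
  ext y
  simp [pUp, upGen]

lemma memL_upGen {L : Type*} [Lattice L] [Fintype L] {A : Finset L} (hA : A.Nonempty) :
    MemL (upGen A) := by
  obtain ⟨a, ha⟩ := hA
  refine ⟨fun x y hx hxy => ?_, a, by simpa [upGen] using ⟨a, ha, le_rfl⟩⟩
  obtain ⟨b, hb, hbx⟩ : ∃ b ∈ A, b ≤ x := by simpa [upGen] using hx
  simpa [upGen] using ⟨b, hb, hbx.trans hxy⟩

/-- Nonnegativity of first differences makes `Φ` antitone with respect to inclusion of up-sets. -/
lemma Minf.anti {L : Type*} [Lattice L] [DecidableEq L] {Φ : Finset L → ℝ} (hΦ : Minf Φ)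
    {U V : Finset L} (hU : MemL U) (hV : MemL V) (h : U ⊆ V) : Φ V ≤ Φ U := by
  have := hΦ [V] (by simpa using hV) U hU
  simpa [succDiffU, Finset.union_eq_right.2 h] using this

/-- If `φ` is nonnegative and completely monotone, then for every nonempty `A ⊆ L`
the Fréchet bound satisfies `B_φ(⟨A⟩*) = φ(⋀A)`: the value `φ(⋀A)` is the minimum of
`Φ(⟨A⟩*)` over all `Φ ∈ M_∞(𝓛)` with `Π(Φ) = φ`; that is, `U ↦ B_φ(U)` is the Möbius
extension of `φ`. -/
theorem stmt_8 {L : Type*} [Lattice L] [Fintype L] [BoundedOrder L] [DecidableEq L]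
    (φ : L → ℝ) (hpos : ∀ x, 0 ≤ φ x) (hcm : CMono φ)
    (A : Finset L) (hA : A.Nonempty) :
    IsLeast {s : ℝ | ∃ Φ : Finset L → ℝ, Minf Φ ∧ (∀ x : L, Φ (pUp x) = φ x) ∧
      s = Φ (upGen A)} (φ (A.inf id)) := by
  constructor
  · refine ⟨fun U => φ (U.inf id), fun l _ W _ => ?_, fun x => ?_, ?_⟩
    · rw [succDiffU_comp_inf]
      by_cases hl : l.map (fun U => U.inf id) = []
      · rw [hl]
        exact hpos _
      · exact hcm _ hl _
    · simp [pUp_eq_upGen, upGen_inf]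
    · simp [upGen_inf]
  · rintro s ⟨Φ, hΦ, hext, rfl⟩
    rw [← hext]
    refine hΦ.anti (memL_upGen hA) ?_ fun y hy => ?_
    · rw [pUp_eq_upGen]
      exact memL_upGen (Finset.singleton_nonempty _)
    · obtain ⟨a, ha, hay⟩ : ∃ a ∈ A, a ≤ y := by simpa [upGen] using hy
      have : A.inf id ≤ y := (Finset.inf_le (f := id) ha).trans hay
      simpa [pUp] using this
end

section
/- Let L be a finite lattice, let φ ∈ M_1(L), and let a ∈ L. Then the function x ↦ λ(φ; a, x) is nonnegative and monotone on L, i.e., λ(φ; a, ·) ∈ M_1(L). -/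
/-!
Every tree `G ∈ 𝒯` containing `a` and `b` satisfies `φ(G) ≤ λ(φ; a, b)`: a leaf `v` of `G` other
than `a` and `b`, attached to `w`, can be deleted, and this changes `φ(G)` by
`φ(v ∨ w) - φ(v) ≥ 0`; repeating this ends with a path from `a` to `b` (`phiTree_le_lam`).
So `λ(φ; a, b)` is the maximum over all trees containing `a` and `b`.

Conversely, if `x ∈ G`, `x ≤ y` and `y ∉ G`, attaching `y` to `x` as a new leaf does not change
`φ(G)`, as `φ(y) - φ(x ∨ y) = 0` (`FinTree.exists_extend`). Monotonicity follows by extending an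
arbitrary path from `a` to `x` to a tree containing `y`. Nonnegativity follows by extending the
one-vertex tree `{0̂}` to a tree containing `a` and `x`, which has value `φ(0̂) ≥ 0`.
-/

attribute [local instance 50] Classical.propDecidable

/-- A tree in `𝒯`: a connected acyclic simple graph whose (nonempty) vertex set is a
subset of `L`, given by its vertex finset and edge finset. -/
structure FinTree (L : Type*) [Lattice L] where
  verts : Finset L
  edges : Finset (Sym2 L)
  nonempty : verts.Nonempty
  loopless : ∀ e ∈ edges, ¬ e.IsDiag
  edge_mem : ∀ e ∈ edges, ∀ x ∈ e, x ∈ verts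
  connected : ∀ x ∈ verts, ∀ y ∈ verts,
    (SimpleGraph.fromEdgeSet (edges : Set (Sym2 L))).Reachable x y
  acyclic : (SimpleGraph.fromEdgeSet (edges : Set (Sym2 L))).IsAcyclic

/-- `φ(G) = Σ_{a ∈ G} φ(a) − Σ_{{a,b} ∈ E(G)} φ(a ∨ b)` for a tree `G ∈ 𝒯`. -/
noncomputable def phiTree {L : Type*} [Lattice L] (φ : L → ℝ) (G : FinTree L) : ℝ :=
  (∑ a ∈ G.verts, φ a) -
    ∑ e ∈ G.edges, Sym2.lift ⟨fun a b => φ (a ⊔ b), fun a b => by simp [sup_comm]⟩ e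

/-- `H` is a path from `a` to `b`: a tree in `𝒯` whose only leaves are `a` and `b`
(the one-vertex tree `{a}` being a path from `a` to `a`). -/
def IsPathTree {L : Type*} [Lattice L] (H : FinTree L) (a b : L) : Prop :=
  a ∈ H.verts ∧ b ∈ H.verts ∧
    ∀ x ∈ H.verts, (H.edges.filter (fun e => x ∈ e)).card ≤ 1 → x = a ∨ x = b

/-- `λ(φ; a, b)`: the maximum of `φ(H)` over paths `H` from `a` to `b`. -/
noncomputable def lam {L : Type*} [Lattice L] (φ : L → ℝ) (a b : L) : ℝ :=
  sSup {r : ℝ | ∃ H : FinTree L, IsPathTree H a b ∧ phiTree φ H = r}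

/-- The successive λ-difference operator `Λ_{a_1,…,a_n} φ`, with
`Λ_a φ(x) = φ(x) − λ(φ; a, x)` and `Λ_{a_1,…,a_n} φ = Λ_{a_n}(Λ_{a_1,…,a_{n−1}} φ)`. -/
noncomputable def lamSucc {L : Type*} [Lattice L] (φ : L → ℝ) (l : List L) : L → ℝ :=
  l.foldl (fun ψ a => fun x => ψ x - lam ψ a x) φ

section

variable {L : Type*} [Lattice L]

/-- The value `φ(a ∨ b)` of an edge `{a, b}`. -/
noncomputable def edgeVal (φ : L → ℝ) (e : Sym2 L) : ℝ :=
  Sym2.lift ⟨fun a b => φ (a ⊔ b), fun a b => by simp [sup_comm]⟩ e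

@[simp]
lemma edgeVal_mk (φ : L → ℝ) (a b : L) : edgeVal φ s(a, b) = φ (a ⊔ b) := rfl

lemma phiTree_eq (φ : L → ℝ) (G : FinTree L) :
    phiTree φ G = (∑ a ∈ G.verts, φ a) - ∑ e ∈ G.edges, edgeVal φ e := rfl

lemma edgeVal_nonneg {φ : L → ℝ} (hφ : M1 φ) (e : Sym2 L) : 0 ≤ edgeVal φ e := by
  induction e with
  | _ a b => exact hφ.1 _

lemma phiTree_le_sum [Fintype L] {φ : L → ℝ} (hφ : M1 φ) (G : FinTree L) :
    phiTree φ G ≤ ∑ x, φ x := by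
  rw [phiTree_eq]
  have h1 : ∑ a ∈ G.verts, φ a ≤ ∑ x, φ x :=
    Finset.sum_le_univ_sum_of_nonneg hφ.1
  have h2 : 0 ≤ ∑ e ∈ G.edges, edgeVal φ e :=
    Finset.sum_nonneg fun e _ => edgeVal_nonneg hφ e
  linarith

/-- In a tree with another vertex `a`, each vertex `v` lies on an edge. -/
lemma FinTree.exists_edge (G : FinTree L) {a v : L} (ha : a ∈ G.verts) (hv : v ∈ G.verts)
    (hne : v ≠ a) : ∃ w, s(v, w) ∈ G.edges := by
  have h := G.connected v hv a ha
  rw [SimpleGraph.reachable_iff_reflTransGen] at h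
  rcases h.cases_head with h | ⟨w, hw, -⟩
  · exact absurd h hne
  · rw [SimpleGraph.fromEdgeSet_adj] at hw
    exact ⟨w, by simpa using hw.1⟩

/-- Deleting a leaf `v` does not decrease `φ(G)`. -/
lemma FinTree.exists_prune {φ : L → ℝ} (hφ : M1 φ) (G : FinTree L) {a v : L}
    (ha : a ∈ G.verts) (hv : v ∈ G.verts) (hne : v ≠ a)
    (hdeg : (G.edges.filter (fun e => v ∈ e)).card ≤ 1) :
    ∃ G' : FinTree L, G'.verts = G.verts.erase v ∧ phiTree φ G ≤ phiTree φ G' := by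
  obtain ⟨w, hw⟩ := G.exists_edge ha hv hne
  have hvw : v ≠ w := fun h => G.loopless _ hw (by simpa using h)
  have huniq : ∀ e ∈ G.edges, v ∈ e → e = s(v, w) := fun e he hve =>
    Finset.card_le_one.1 hdeg e (by simp [he, hve]) _ (by simp [hw])
  let f : L → L := fun x => if x = v then w else x
  let G' : FinTree L :=
    { verts := G.verts.erase v
      edges := G.edges.erase s(v, w)
      nonempty := ⟨a, by simp [ha, hne.symm]⟩
      loopless := fun e he => G.loopless e (Finset.mem_of_mem_erase he)
      edge_mem := by
        intro e he x hx
        rw [Finset.mem_erase] at he ⊢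
        refine ⟨?_, G.edge_mem e he.2 x hx⟩
        rintro rfl
        exact he.1 (huniq e he.2 hx)
      connected := by
        intro x hx y hy
        rw [Finset.mem_erase] at hx hy
        have h := G.connected x hx.2 y hy.2
        rw [SimpleGraph.reachable_iff_reflTransGen] at h ⊢
        -- Contracting the edge `{v, w}` onto `w` sends walks of `G` to walks avoiding `v`.
        have key : Relation.ReflTransGen
            (SimpleGraph.fromEdgeSet ((G.edges.erase s(v, w) : Finset (Sym2 L)) :
              Set (Sym2 L))).Adj (f x) (f y) := by
          refine Relation.ReflTransGen.lift' f ?_ _ _ h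
          intro p q hpq
          rw [SimpleGraph.fromEdgeSet_adj] at hpq
          have hpq1 : s(p, q) ∈ G.edges := by simpa using hpq.1
          by_cases hs : s(p, q) = s(v, w)
          · have : f p = f q := by
              rcases Sym2.eq_iff.1 hs with ⟨rfl, rfl⟩ | ⟨rfl, rfl⟩ <;> simp [f]
            rw [Function.onFun, this]
          · have hp : p ≠ v := by
              rintro rfl
              exact hs (huniq _ hpq1 (by simp))
            have hq : q ≠ v := by
              rintro rfl
              exact hs (huniq _ hpq1 (by simp))
            refine Relation.ReflTransGen.single ?_
            simp only [f, hp, hq, if_false, SimpleGraph.fromEdgeSet_adj]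
            exact ⟨by simp [hpq1, hs], hpq.2⟩
        simpa [f, hx.1, hy.1] using key
      acyclic := by
        refine G.acyclic.anti (SimpleGraph.fromEdgeSet_mono ?_)
        exact_mod_cast Finset.erase_subset _ _ }
  refine ⟨G', rfl, ?_⟩
  have h1 := Finset.add_sum_erase G.verts φ hv
  have h2 := Finset.add_sum_erase G.edges (edgeVal φ) hw
  have h3 : φ v ≤ φ (v ⊔ w) := hφ.2 le_sup_left
  rw [phiTree_eq, phiTree_eq]
  simp only [edgeVal_mk] at h2
  change _ ≤ ∑ x ∈ G.verts.erase v, φ x - ∑ e ∈ G.edges.erase s(v, w), edgeVal φ e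
  linarith

/-- Any tree containing `a` and `b` can be pruned to a path from `a` to `b`. -/
lemma FinTree.exists_path {φ : L → ℝ} (hφ : M1 φ) {a b : L} :
    ∀ (n : ℕ) (G : FinTree L), G.verts.card = n → a ∈ G.verts → b ∈ G.verts →
      ∃ H : FinTree L, IsPathTree H a b ∧ phiTree φ G ≤ phiTree φ H := by
  intro n
  induction n with
  | zero =>
    intro G hn ha
    simp [Finset.card_eq_zero.1 hn] at ha
  | succ n ih =>
    intro G hn ha hb
    by_cases hP : IsPathTree G a b
    · exact ⟨G, hP, le_rfl⟩
    · simp only [IsPathTree, ha, hb, true_and, not_forall, not_or] at hP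
      obtain ⟨v, hv, hdeg, hva, hvb⟩ := hP
      obtain ⟨G', hG', hle⟩ := G.exists_prune hφ ha hv hva hdeg
      obtain ⟨H, hH, hle'⟩ := ih G' (by rw [hG', Finset.card_erase_of_mem hv, hn]; rfl)
        (by simp [hG', ha, Ne.symm hva]) (by simp [hG', hb, Ne.symm hvb])
      exact ⟨H, hH, hle.trans hle'⟩

lemma phiTree_le_lam [Fintype L] {φ : L → ℝ} (hφ : M1 φ) {a b : L} (G : FinTree L)
    (ha : a ∈ G.verts) (hb : b ∈ G.verts) : phiTree φ G ≤ lam φ a b := by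
  obtain ⟨H, hH, hle⟩ := FinTree.exists_path hφ _ G rfl ha hb
  refine hle.trans (le_csSup ⟨∑ x, φ x, ?_⟩ ⟨H, hH, rfl⟩)
  rintro _ ⟨K, -, rfl⟩
  exact phiTree_le_sum hφ K

/-- A tree containing `x` extends, for any `y ≥ x`, to a tree containing `y` with the same
value. -/
lemma FinTree.exists_extend (φ : L → ℝ) (G : FinTree L) {x y : L} (hx : x ∈ G.verts)
    (hxy : x ≤ y) :
    ∃ G' : FinTree L, G.verts ⊆ G'.verts ∧ y ∈ G'.verts ∧ phiTree φ G' = phiTree φ G := by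
  by_cases hy : y ∈ G.verts
  · exact ⟨G, subset_rfl, hy, rfl⟩
  have hne : x ≠ y := fun h => hy (h ▸ hx)
  have hnew : s(x, y) ∉ G.edges := fun h => hy (G.edge_mem _ h y (by simp))
  have hle : SimpleGraph.fromEdgeSet (G.edges : Set (Sym2 L)) ≤
      SimpleGraph.fromEdgeSet ((insert s(x, y) G.edges : Finset (Sym2 L)) : Set (Sym2 L)) :=
    SimpleGraph.fromEdgeSet_mono (by exact_mod_cast Finset.subset_insert _ _)
  have hreach : ∀ z ∈ insert y G.verts,
      (SimpleGraph.fromEdgeSet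
        ((insert s(x, y) G.edges : Finset (Sym2 L)) : Set (Sym2 L))).Reachable x z := by
    intro z hz
    rcases Finset.mem_insert.1 hz with rfl | hz
    · refine SimpleGraph.Adj.reachable ?_
      rw [SimpleGraph.fromEdgeSet_adj]
      exact ⟨by simp, hne⟩
    · exact (G.connected x hx z hz).mono hle
  -- `y` is isolated in the graph of `G`, so the new edge closes no cycle.
  have hnr : ¬ (SimpleGraph.fromEdgeSet (G.edges : Set (Sym2 L))).Reachable x y := by
    intro h
    rw [SimpleGraph.reachable_iff_reflTransGen] at h
    rcases h.cases_tail with h | ⟨w, -, hw⟩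
    · exact hne h.symm
    · rw [SimpleGraph.fromEdgeSet_adj] at hw
      exact hy (G.edge_mem s(w, y) (by simpa using hw.1) y (by simp))
  let G' : FinTree L :=
    { verts := insert y G.verts
      edges := insert s(x, y) G.edges
      nonempty := ⟨y, by simp⟩
      loopless := by
        intro e he
        rcases Finset.mem_insert.1 he with rfl | he
        · simpa using hne
        · exact G.loopless e he
      edge_mem := by
        intro e he z hz
        rcases Finset.mem_insert.1 he with rfl | he
        · rcases Sym2.mem_iff.1 hz with rfl | rfl
          · simp [hx]
          · simp
        · exact Finset.mem_insert_of_mem (G.edge_mem e he z hz)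
      connected := fun p hp q hq => (hreach p hp).symm.trans (hreach q hq)
      acyclic := by
        refine (G.acyclic.sup_edge_of_not_reachable hnr).anti ?_
        intro p q hpq
        rw [SimpleGraph.fromEdgeSet_adj] at hpq
        rw [SimpleGraph.sup_adj, SimpleGraph.edge, SimpleGraph.fromEdgeSet_adj,
          SimpleGraph.fromEdgeSet_adj]
        rcases Finset.mem_insert.1 (Finset.mem_coe.1 hpq.1) with h | h
        · exact Or.inr ⟨h, hpq.2⟩
        · exact Or.inl ⟨h, hpq.2⟩ }
  refine ⟨G', Finset.subset_insert _ _, Finset.mem_insert_self _ _, ?_⟩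
  rw [phiTree_eq, phiTree_eq]
  change ∑ z ∈ insert y G.verts, φ z - ∑ e ∈ insert s(x, y) G.edges, edgeVal φ e = _
  rw [Finset.sum_insert hy, Finset.sum_insert hnew, edgeVal_mk, sup_eq_right.2 hxy]
  ring

/-- The one-vertex tree. -/
def FinTree.single (x : L) : FinTree L where
  verts := {x}
  edges := ∅
  nonempty := ⟨x, by simp⟩
  loopless := by simp
  edge_mem := by simp
  connected := by simp
  acyclic := by simp

lemma FinTree.exists_containing [OrderBot L] (φ : L → ℝ) (a x : L) :
    ∃ G : FinTree L, a ∈ G.verts ∧ x ∈ G.verts ∧ phiTree φ G = φ ⊥ := by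
  have h0 : (⊥ : L) ∈ (FinTree.single (⊥ : L)).verts := Finset.mem_singleton_self _
  obtain ⟨G, hG, ha, hval⟩ := FinTree.exists_extend φ _ h0 (bot_le (a := a))
  obtain ⟨G', hG', hx, hval'⟩ := FinTree.exists_extend φ G (hG h0) (bot_le (a := x))
  refine ⟨G', hG' ha, hx, ?_⟩
  rw [hval', hval]
  simp [phiTree, FinTree.single]

end

/-- If `φ ∈ M_1(L)` then `λ(φ; a, ·) ∈ M_1(L)`. -/
theorem stmt_10 {L : Type*} [Lattice L] [Fintype L] [BoundedOrder L]
    (φ : L → ℝ) (hφ : M1 φ) (a : L) :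
    M1 (fun x => lam φ a x) := by
  refine ⟨fun x => ?_, fun x y hxy => ?_⟩
  · obtain ⟨G, ha, hx, hval⟩ := FinTree.exists_containing φ a x
    exact (hval ▸ hφ.1 ⊥).trans (phiTree_le_lam hφ G ha hx)
  · refine csSup_le ?_ ?_
    · obtain ⟨G, ha, hx, -⟩ := FinTree.exists_containing φ a x
      obtain ⟨H, hH, -⟩ := FinTree.exists_path hφ _ G rfl ha hx
      exact ⟨_, H, hH, rfl⟩
    · rintro _ ⟨H, ⟨ha, hx, -⟩, rfl⟩
      obtain ⟨G, hsub, hy, hval⟩ := H.exists_extend φ hx hxy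
      exact hval ▸ phiTree_le_lam hφ G (hsub ha) hy
end

section
/- Let L be a finite lattice, φ ∈ M_1(L), and a_1,…,a_n ∈ L with n ≥ 2. If a_n ≤ a_i for some i ≤ n−1, then Λ_{a_1,…,a_n} φ = Λ_{a_1,…,a_{n−1}} φ. -/
/-! For monotone `φ`, deleting a leaf `c` with neighbour `p` from a tree changes its `φ`-value by
`φ (c ⊔ p) - φ c ≥ 0`. Pruning leaves therefore gives two facts.

* `phiTree_le`: the value of a tree is at most `φ x` for each of its vertices `x`
  (prune everything except `x`).
* `phiTree_le_lam`: any tree containing `a` and `x`, not just a path, has value at most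
  `lam φ a x` (prune all leaves other than `a` and `x`).

Conversely, a new vertex `x` can be attached to a vertex `y` of a tree at the cost
`φ (x ⊔ y) - φ x` (`exists_attach`). Together these show that `Λ_a φ` is again nonnegative and
monotone, that `Λ_a φ ≤ φ`, and that `Λ_a φ` vanishes at `a`. Hence `ψ = Λ_{a_1,…,a_{n-1}} φ` is
nonnegative, monotone and vanishes at every `a_i`, so also at `a_n ≤ a_i`. Then
`0 ≤ lam ψ a_n x ≤ ψ a_n = 0` for all `x`, that is, `Λ_{a_n} ψ = ψ`. -/

attribute [local instance 50] Classical.propDecidable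

/-! ### Pruning and attaching leaves -/

/-- The graph underlying a tree, on all of `L`; elements outside the tree are isolated. -/
abbrev FinTree.graph {L : Type*} [Lattice L] (H : FinTree L) : SimpleGraph L :=
  SimpleGraph.fromEdgeSet (H.edges : Set (Sym2 L))

lemma exists_prune {L : Type*} [Lattice L] {φ : L → ℝ} (hφ : Monotone φ) (H : FinTree L)
    {c x : L} (hc : c ∈ H.verts) (hx : x ∈ H.verts) (hne : x ≠ c)
    (hdeg : (H.edges.filter (fun e => c ∈ e)).card ≤ 1) :
    ∃ H' : FinTree L, H'.verts = H.verts.erase c ∧ phiTree φ H ≤ phiTree φ H' := by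
  obtain ⟨p, hp⟩ : ∃ p, H.graph.Adj c p := by
    obtain ⟨w⟩ := H.connected c hc x hx
    cases w with
    | nil => exact absurd rfl hne
    | cons h _ => exact ⟨_, h⟩
  have hpe : s(c, p) ∈ H.edges := by simpa using hp.1
  have hcp : c ≠ p := hp.2
  have huniq : ∀ e ∈ H.edges, c ∈ e → e = s(c, p) := fun e he hce =>
    Finset.card_le_one.1 hdeg e (by simp [he, hce]) _ (by simp [hpe])
  -- The retraction sending `c` to its neighbour turns walks of `H` into walks avoiding `c`.
  have hretr : ∀ u v, H.graph.Reachable u v →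
      (SimpleGraph.fromEdgeSet ((H.edges.erase s(c, p) : Finset (Sym2 L)) : Set (Sym2 L))).Reachable
        (if u = c then p else u) (if v = c then p else v) := by
    rintro u v ⟨w⟩
    induction w with
    | nil => exact SimpleGraph.Reachable.refl _
    | @cons u v _ h _ ih =>
      refine SimpleGraph.Reachable.trans ?_ ih
      have huv : s(u, v) ∈ H.edges := by simpa using h.1
      have hne' : u ≠ v := h.2
      by_cases huc : u = c
      · subst huc
        have hvp : v = p := Sym2.congr_right.1 (huniq _ huv (by simp))
        subst hvp
        simp [hne'.symm]
      · by_cases hvc : v = c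
        · subst hvc
          have hup : u = p := by
            have h1 := huniq _ huv (by simp)
            rw [Sym2.eq_swap] at h1
            exact Sym2.congr_right.1 h1
          subst hup
          simp [huc]
        · rw [if_neg huc, if_neg hvc]
          apply SimpleGraph.Adj.reachable
          rw [SimpleGraph.fromEdgeSet_adj]
          refine ⟨?_, hne'⟩
          rw [Finset.mem_coe, Finset.mem_erase]
          refine ⟨fun h1 => ?_, huv⟩
          have : c ∈ s(u, v) := by rw [h1]; simp
          rcases Sym2.mem_iff.1 this with h2 | h2
          · exact huc h2.symm
          · exact hvc h2.symm
  refine ⟨⟨H.verts.erase c, H.edges.erase s(c, p), ⟨x, by simp [hne, hx]⟩,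
    fun e he => H.loopless e (Finset.mem_of_mem_erase he), ?_, ?_, ?_⟩, rfl, ?_⟩
  · intro e he y hy
    rw [Finset.mem_erase] at he ⊢
    refine ⟨?_, H.edge_mem e he.2 y hy⟩
    rintro rfl
    exact he.1 (huniq e he.2 hy)
  · intro u hu v hv
    rw [Finset.mem_erase] at hu hv
    simpa [hu.1, hv.1] using hretr u v (H.connected u hu.2 v hv.2)
  · refine H.acyclic.anti (SimpleGraph.fromEdgeSet_mono ?_)
    exact_mod_cast Finset.erase_subset _ _
  · unfold phiTree
    dsimp only
    rw [← Finset.add_sum_erase _ _ hc, ← Finset.add_sum_erase _ _ hpe]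
    have : φ c ≤ φ (c ⊔ p) := hφ le_sup_left
    simp only [Sym2.lift_mk]
    linarith

/-- A tree with a vertex `x` and at least one other vertex has a leaf other than `x`: the endpoint
of a longest path starting at `x`. -/
lemma exists_leaf {L : Type*} [Lattice L] [Fintype L] (H : FinTree L) {x y : L}
    (hx : x ∈ H.verts) (hy : y ∈ H.verts) (hxy : x ≠ y) :
    ∃ c ∈ H.verts, c ≠ x ∧ (H.edges.filter (fun e => c ∈ e)).card ≤ 1 := by
  let P : ℕ → Prop := fun n => ∃ c, ∃ p : H.graph.Walk x c, p.IsPath ∧ p.length = n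
  obtain ⟨w, hw⟩ := (H.connected x hx y hy).exists_isPath
  have hbound : ∀ n, P n → n ≤ Fintype.card L := by
    rintro n ⟨c, p, hp, rfl⟩
    exact hp.length_lt.le
  have hPw : P w.length := ⟨y, w, hw, rfl⟩
  obtain ⟨c, p, hp, hlen⟩ : P (Nat.findGreatest P (Fintype.card L)) :=
    Nat.findGreatest_spec (hbound _ hPw) hPw
  have hmax : ∀ n, P n → n ≤ p.length := fun n hn =>
    hlen ▸ Nat.le_findGreatest (hbound n hn) hn
  have hpos : 0 < p.length := by
    refine lt_of_lt_of_le ?_ (hmax _ hPw)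
    rw [Nat.pos_iff_ne_zero]
    exact fun h0 => hxy (SimpleGraph.Walk.eq_of_length_eq_zero h0)
  have hnil : ¬ p.Nil := fun h => by
    rw [← SimpleGraph.Walk.length_eq_zero_iff] at h; omega
  have hadj := p.adj_penultimate hnil
  refine ⟨c, ?_, ?_, ?_⟩
  · exact H.edge_mem s(p.penultimate, c) (by simpa using hadj.1) c (by simp)
  · rintro rfl
    exact hnil (hp.nil_iff_eq.2 rfl)
  · have hall : ∀ e ∈ H.edges, c ∈ e → e = s(c, p.penultimate) := by
      intro e he hce
      obtain ⟨v, rfl⟩ := Sym2.mem_iff_exists.1 hce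
      have hcv : H.graph.Adj c v :=
        ⟨by simpa using he, fun h => H.loopless _ he (by simpa using h)⟩
      have hsupp : v ∈ p.support := by
        by_contra hv
        have := hmax _ ⟨v, p.concat hcv, hp.concat hv hcv, rfl⟩
        rw [SimpleGraph.Walk.length_concat] at this
        omega
      rw [H.acyclic.eq_penultimate_of_adj_end hp hcv hsupp]
    rw [Finset.card_le_one]
    intro e he f hf
    rw [Finset.mem_filter] at he hf
    rw [hall e he.1 he.2, hall f hf.1 hf.2]

lemma phiTree_le {L : Type*} [Lattice L] [Fintype L] {φ : L → ℝ} (hφ : Monotone φ)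
    (H : FinTree L) {x : L} (hx : x ∈ H.verts) : phiTree φ H ≤ φ x := by
  induction hn : H.verts.card using Nat.strong_induction_on generalizing H with
  | _ n ih =>
    by_cases hy : ∃ y ∈ H.verts, x ≠ y
    · obtain ⟨y, hy, hxy⟩ := hy
      obtain ⟨c, hc, hcx, hdeg⟩ := exists_leaf H hx hy hxy
      obtain ⟨H', hv, hle⟩ := exists_prune hφ H hc hx hcx.symm hdeg
      refine hle.trans (ih _ ?_ H' ?_ rfl)
      · rw [hv, ← hn]; exact Finset.card_erase_lt_of_mem hc
      · rw [hv]; simp [hcx.symm, hx]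
    · push Not at hy
      have hverts : H.verts = {x} := by
        ext y; rw [Finset.mem_singleton]
        exact ⟨fun h => (hy y h).symm, fun h => h ▸ hx⟩
      have hedges : H.edges = ∅ := by
        rw [Finset.eq_empty_iff_forall_notMem]
        intro e he
        induction e with
        | _ u v =>
          apply H.loopless _ he
          have hu := hy u (H.edge_mem _ he u (by simp))
          have hv := hy v (H.edge_mem _ he v (by simp))
          simp [← hu, ← hv]
      simp [phiTree, hverts, hedges]

lemma exists_path {L : Type*} [Lattice L] {φ : L → ℝ} (hφ : Monotone φ)
    (H : FinTree L) {a x : L} (ha : a ∈ H.verts) (hx : x ∈ H.verts) :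
    ∃ H' : FinTree L, IsPathTree H' a x ∧ phiTree φ H ≤ phiTree φ H' := by
  induction hn : H.verts.card using Nat.strong_induction_on generalizing H with
  | _ n ih =>
    by_cases hp : IsPathTree H a x
    · exact ⟨H, hp, le_rfl⟩
    · obtain ⟨c, hc, hdeg, hca, hcx⟩ : ∃ c ∈ H.verts,
          (H.edges.filter (fun e => c ∈ e)).card ≤ 1 ∧ c ≠ a ∧ c ≠ x := by
        by_contra! hcon
        refine hp ⟨ha, hx, fun c hc hdeg => ?_⟩
        by_cases hca : c = a
        · exact Or.inl hca
        · exact Or.inr (hcon c hc hdeg hca)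
      obtain ⟨H₁, hv, hle⟩ := exists_prune hφ H hc hx hcx.symm hdeg
      obtain ⟨H', h1, h2⟩ := ih H₁.verts.card
        (by rw [hv, ← hn]; exact Finset.card_erase_lt_of_mem hc) H₁
        (by rw [hv]; simp [hca.symm, ha]) (by rw [hv]; simp [hcx.symm, hx]) rfl
      exact ⟨H', h1, hle.trans h2⟩

lemma phiTree_le_lam_s13 {L : Type*} [Lattice L] [Fintype L] {φ : L → ℝ} (hφ : Monotone φ)
    (H : FinTree L) {a x : L} (ha : a ∈ H.verts) (hx : x ∈ H.verts) :
    phiTree φ H ≤ lam φ a x := by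
  obtain ⟨H', hp, hle⟩ := exists_path hφ H ha hx
  refine hle.trans (le_csSup ⟨φ x, ?_⟩ ⟨H', hp, rfl⟩)
  rintro r ⟨K, hK, rfl⟩
  exact phiTree_le hφ K hK.2.1

/-- The one-vertex tree on `a`. -/
noncomputable def singleTree {L : Type*} [Lattice L] (a : L) : FinTree L where
  verts := {a}
  edges := ∅
  nonempty := by simp
  loopless := by simp
  edge_mem := by simp
  connected := by
    intro x hx y hy
    rw [Finset.mem_singleton] at hx hy
    rw [hx, hy]
  acyclic := by simp

/-- If `x` already lies in the tree, the tree itself is a witness, since `φ x ≤ φ (x ⊔ y)`. -/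
lemma exists_attach {L : Type*} [Lattice L] {φ : L → ℝ} (hφ : Monotone φ)
    (H : FinTree L) {y : L} (x : L) (hy : y ∈ H.verts) :
    ∃ H' : FinTree L, H.verts ⊆ H'.verts ∧ x ∈ H'.verts ∧
      phiTree φ H + φ x - φ (x ⊔ y) ≤ phiTree φ H' := by
  by_cases hx : x ∈ H.verts
  · have : φ x ≤ φ (x ⊔ y) := hφ le_sup_left
    exact ⟨H, subset_rfl, hx, by linarith⟩
  have hxy : x ≠ y := fun h => hx (h ▸ hy)
  have hnot : s(x, y) ∉ H.edges := fun h => hx (H.edge_mem _ h x (by simp))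
  have hgraph : SimpleGraph.fromEdgeSet ((insert s(x, y) H.edges : Finset (Sym2 L)) :
      Set (Sym2 L)) = H.graph ⊔ SimpleGraph.edge x y := by
    rw [Finset.coe_insert, Set.insert_eq, Set.union_comm, SimpleGraph.fromEdgeSet_union]
    rfl
  have hnr : ¬ H.graph.Reachable x y := by
    rintro ⟨w⟩
    cases w with
    | nil => exact hxy rfl
    | cons h _ => exact hx (H.edge_mem _ (by simpa using h.1) x (Sym2.mem_mk_left _ _))
  refine ⟨⟨insert x H.verts, insert s(x, y) H.edges, ⟨x, by simp⟩, ?_, ?_, ?_, ?_⟩,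
    Finset.subset_insert _ _, Finset.mem_insert_self _ _, ?_⟩
  · intro e he
    rcases Finset.mem_insert.1 he with rfl | he
    · simpa using hxy
    · exact H.loopless e he
  · intro e he z hz
    rcases Finset.mem_insert.1 he with rfl | he
    · rcases Sym2.mem_iff.1 hz with rfl | rfl
      · simp
      · simp [hy]
    · exact Finset.mem_insert_of_mem (H.edge_mem e he z hz)
  · rw [hgraph]
    have key : ∀ u ∈ insert x H.verts, (H.graph ⊔ SimpleGraph.edge x y).Reachable u y := by
      intro u hu
      rcases Finset.mem_insert.1 hu with rfl | hu
      · apply SimpleGraph.Adj.reachable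
        rw [SimpleGraph.sup_adj, SimpleGraph.edge_adj]
        exact Or.inr ⟨Or.inl ⟨rfl, rfl⟩, hxy⟩
      · exact (H.connected u hu y hy).mono le_sup_left
    exact fun u hu v hv => (key u hu).trans (key v hv).symm
  · rw [hgraph]
    exact H.acyclic.sup_edge_of_not_reachable hnr
  · unfold phiTree
    dsimp only
    rw [Finset.sum_insert hx, Finset.sum_insert hnot]
    simp only [Sym2.lift_mk]
    linarith

/-! ### Bounds on `lam` -/

/-- Witnessed by the tree `a — ⊥ — x`, whose value is at least `φ ⊥`. -/
lemma lam_nonneg {L : Type*} [Lattice L] [Fintype L] [BoundedOrder L] {φ : L → ℝ} (hφ : M1 φ)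
    (a x : L) : 0 ≤ lam φ a x := by
  obtain ⟨H₁, hs₁, hb₁, hv₁⟩ := exists_attach hφ.2 (singleTree a) (y := a) ⊥ (by simp [singleTree])
  obtain ⟨H₂, hs₂, hx₂, hv₂⟩ := exists_attach hφ.2 H₁ x hb₁
  have h := phiTree_le_lam_s13 hφ.2 H₂ (hs₂ (hs₁ (by simp [singleTree] : a ∈ (singleTree a).verts))) hx₂
  have hsingle : phiTree φ (singleTree a) = φ a := by simp [phiTree, singleTree]
  rw [bot_sup_eq] at hv₁
  rw [sup_bot_eq] at hv₂
  have := hφ.1 ⊥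
  linarith

lemma exists_isPathTree {L : Type*} [Lattice L] {φ : L → ℝ} (hφ : Monotone φ) (a x : L) :
    ∃ H : FinTree L, IsPathTree H a x := by
  obtain ⟨H₁, hs₁, hx₁, -⟩ := exists_attach hφ (singleTree a) (y := a) x (by simp [singleTree])
  obtain ⟨H', h, -⟩ := exists_path hφ H₁ (hs₁ (by simp [singleTree] : a ∈ (singleTree a).verts)) hx₁
  exact ⟨H', h⟩

lemma lam_le {L : Type*} [Lattice L] {φ : L → ℝ} (hφ : Monotone φ) {a x : L} {r : ℝ}
    (h : ∀ H : FinTree L, IsPathTree H a x → phiTree φ H ≤ r) : lam φ a x ≤ r := by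
  obtain ⟨H, hH⟩ := exists_isPathTree hφ a x
  refine csSup_le ⟨_, H, hH, rfl⟩ ?_
  rintro r ⟨K, hK, rfl⟩
  exact h K hK

lemma lam_le_left {L : Type*} [Lattice L] [Fintype L] {φ : L → ℝ} (hφ : Monotone φ) (a x : L) :
    lam φ a x ≤ φ a :=
  lam_le hφ fun H hH => phiTree_le hφ H hH.1

lemma lam_le_right {L : Type*} [Lattice L] [Fintype L] {φ : L → ℝ} (hφ : Monotone φ) (a x : L) :
    lam φ a x ≤ φ x :=
  lam_le hφ fun H hH => phiTree_le hφ H hH.2.1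

lemma lam_self {L : Type*} [Lattice L] [Fintype L] {φ : L → ℝ} (hφ : Monotone φ) (a : L) :
    lam φ a a = φ a := by
  refine le_antisymm (lam_le_left hφ a a) ?_
  have h := phiTree_le_lam_s13 hφ (singleTree a) (a := a) (x := a) (by simp [singleTree])
    (by simp [singleTree])
  simpa [phiTree, singleTree] using h

/-! ### The λ-difference operator preserves `M1` -/

lemma M1.lamDiff {L : Type*} [Lattice L] [Fintype L] {φ : L → ℝ} (hφ : M1 φ) (a : L) :
    M1 (fun x => φ x - lam φ a x) := by
  refine ⟨fun x => sub_nonneg.2 (lam_le_right hφ.2 a x), fun x y hxy => ?_⟩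
  have : lam φ a y ≤ lam φ a x + φ y - φ x := by
    refine lam_le hφ.2 fun H hH => ?_
    obtain ⟨H', hs, hx, hv⟩ := exists_attach hφ.2 H x hH.2.1
    have h := phiTree_le_lam_s13 hφ.2 H' (hs hH.1) hx
    rw [sup_eq_right.2 hxy] at hv
    linarith
  dsimp only
  linarith

lemma lamSucc_concat {L : Type*} [Lattice L] (φ : L → ℝ) (l : List L) (a : L) :
    lamSucc φ (l ++ [a]) = fun x => lamSucc φ l x - lam (lamSucc φ l) a x := by
  simp [lamSucc]

lemma M1.lamSucc {L : Type*} [Lattice L] [Fintype L] [BoundedOrder L] {φ : L → ℝ} (hφ : M1 φ)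
    (l : List L) : M1 (lamSucc φ l) ∧ ∀ b ∈ l, _root_.lamSucc φ l b = 0 := by
  induction l using List.reverseRecOn with
  | nil => exact ⟨hφ, by simp⟩
  | append_singleton l a ih =>
    have hM : M1 (_root_.lamSucc φ (l ++ [a])) := by
      rw [lamSucc_concat]; exact ih.1.lamDiff a
    refine ⟨hM, fun b hb => ?_⟩
    rcases List.mem_append.1 hb with hb | hb
    · refine le_antisymm ?_ (hM.1 b)
      -- `Λ_a ψ ≤ ψ`, so zeros of `ψ` persist.
      have h0 := lam_nonneg ih.1 a b
      rw [lamSucc_concat]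
      dsimp only
      rw [ih.2 b hb]
      linarith
    · rw [List.mem_singleton] at hb
      subst hb
      rw [lamSucc_concat]
      dsimp only
      rw [lam_self ih.1.2, sub_self]

/-- If `a_n ≤ a_i` for some `i ≤ n − 1`, then
`Λ_{a_1,…,a_n} φ = Λ_{a_1,…,a_{n−1}} φ` for `φ ∈ M_1(L)`. -/
theorem stmt_13 {L : Type*} [Lattice L] [Fintype L] [BoundedOrder L]
    (φ : L → ℝ) (hφ : M1 φ) (l : List L) (a : L) (h : ∃ b ∈ l, a ≤ b) :
    lamSucc φ (l ++ [a]) = lamSucc φ l := by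
  obtain ⟨b, hb, hab⟩ := h
  obtain ⟨hM, hz⟩ := hφ.lamSucc l
  have ha : lamSucc φ l a ≤ 0 := (hM.2 hab).trans (hz b hb).le
  rw [lamSucc_concat]
  funext x
  have h1 := lam_le_left hM.2 a x
  have h2 := lam_nonneg hM a x
  linarith
end
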